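/- arXiv:2410.01587 — 2 statements merged into one kernel-verified Lean document; each statement's English description precedes it below -/
import Mathlib

section
/- Let A = J(i,n), the n×n Jordan block with the imaginary unit i on the diagonal, regarded as an element of SL(n,ℍ). Then there exists an involution g ∈ SL(n,ℍ) (g² = Iₙ), with all entries complex, such that gAg⁻¹ = −A⁻¹; explicitly, the upper triangular matrix g = [x_{p,q}] with x_{p,q} = 0 for p > q and for q = n, p ≠ n; x_{n,n} = 1; and x_{p,q} = i·x_{p+1,q} − x_{p+1,q+1} for 1 ≤ p ≤ q ≤ n−1, works. -/
set_option maxHeartbeats 1000000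

noncomputable section

open Matrix

/-- The embedding of `ℂ` into the real quaternions, onto the subalgebra spanned by `1` and `i`. -/
def C2H (z : ℂ) : Quaternion ℝ := ⟨z.re, z.im, 0, 0⟩

/-- For a quaternion `q = a + b i + c j + d k`, its first complex coordinate `a + b i`. -/
def qc1 (q : Quaternion ℝ) : ℂ := ⟨q.re, q.imI⟩

/-- For a quaternion `q = a + b i + c j + d k`, its second complex coordinate `c + d i`,
so that `q = qc1 q + (qc2 q) * j`. -/
def qc2 (q : Quaternion ℝ) : ℂ := ⟨q.imJ, q.imK⟩

/-- The embedding `Φ` of quaternionic square matrices into complex matrices of doubled size: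
writing `A = A₁ + A₂ · j`, `Φ A` is the block matrix `[[A₁, A₂], [-conj A₂, conj A₁]]`. -/
def Phi {m : Type*} (A : Matrix m m (Quaternion ℝ)) : Matrix (m ⊕ m) (m ⊕ m) ℂ :=
  Matrix.fromBlocks (A.map qc1) (A.map qc2)
    (-(A.map fun q => (starRingEnd ℂ) (qc2 q))) (A.map fun q => (starRingEnd ℂ) (qc1 q))

/-- The determinant of a quaternionic matrix `A`: the determinant of `Φ A`.
`A ∈ GL(n, ℍ)` means `qdet A ≠ 0`, and `A ∈ SL(n, ℍ)` means `qdet A = 1`. -/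
def qdet {m : Type*} [Fintype m] [DecidableEq m] (A : Matrix m m (Quaternion ℝ)) : ℂ :=
  (Phi A).det

/-- The `m × m` Jordan block `J(λ, m)` over `ℂ`: `λ` on the diagonal, `1` on the
superdiagonal, `0` elsewhere. -/
def jordanC (lam : ℂ) (m : ℕ) : Matrix (Fin m) (Fin m) ℂ :=
  Matrix.of fun i j => if (j : ℕ) = (i : ℕ) then lam else if (j : ℕ) = (i : ℕ) + 1 then 1 else 0

/-- The `m × m` Jordan block `J(λ, m)`, `λ ∈ ℂ`, viewed as a quaternionic matrix. -/
def jordanH (lam : ℂ) (m : ℕ) : Matrix (Fin m) (Fin m) (Quaternion ℝ) :=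
  (jordanC lam m).map C2H

/-- Entries of the explicit reversing matrix for `J(i, n)` (with `1`-based indices):
`x p q = 0` for `p > q` or `q > n`; `x p n = 0` for `p ≠ n`; `x n n = 1`; and
`x p q = i · x (p+1) q - x (p+1) (q+1)` for `1 ≤ p ≤ q ≤ n - 1`. -/
def iotaAux (n : ℕ) (p q : ℕ) : ℂ :=
  if h1 : q < p ∨ n < q then 0
  else if h2 : q = n then (if p = n then 1 else 0)
  else Complex.I * iotaAux n (p + 1) q - iotaAux n (p + 1) (q + 1)
termination_by n - p
decreasing_by all_goals omega

/-- The explicit complex upper triangular matrix conjugating `J(i, n)` to `-J(i, n)⁻¹`. -/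
def gIota (n : ℕ) : Matrix (Fin n) (Fin n) ℂ :=
  Matrix.of fun p q => iotaAux n ((p : ℕ) + 1) ((q : ℕ) + 1)

lemma C2H_re (z : ℂ) : (C2H z).re = z.re := rfl

lemma C2H_imI (z : ℂ) : (C2H z).imI = z.im := rfl

lemma C2H_imJ (z : ℂ) : (C2H z).imJ = 0 := rfl

lemma C2H_imK (z : ℂ) : (C2H z).imK = 0 := rfl

/-- The embedding `C2H` as a ring homomorphism. -/
def C2Hhom : ℂ →+* Quaternion ℝ where
  toFun := C2H
  map_one' := by apply Quaternion.ext <;> simp [C2H_re, C2H_imI, C2H_imJ, C2H_imK] <;> rfl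
  map_zero' := by apply Quaternion.ext <;> simp [C2H_re, C2H_imI, C2H_imJ, C2H_imK] <;> rfl
  map_mul' a b := by apply Quaternion.ext <;> simp [C2H_re, C2H_imI, C2H_imJ, C2H_imK]
  map_add' a b := by apply Quaternion.ext <;> simp [C2H_re, C2H_imI, C2H_imJ, C2H_imK]

lemma iota_lt {n p q : ℕ} (h : q < p ∨ n < q) : iotaAux n p q = 0 := by
  rw [iotaAux]; simp [h]

lemma iota_last {n p : ℕ} : iotaAux n p n = if p = n then 1 else 0 := by
  rw [iotaAux]
  by_cases h : n < p
  · simp [h]; omega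
  · simp [h]

lemma iota_rec {n p q : ℕ} (hq : q < n) :
    iotaAux n p q = Complex.I * iotaAux n (p + 1) q - iotaAux n (p + 1) (q + 1) := by
  by_cases h : q < p
  · rw [iota_lt (Or.inl h), iota_lt (Or.inl (by omega)), iota_lt (Or.inl (by omega))]; simp
  · conv_lhs => rw [iotaAux]
    rw [dif_neg (by omega), dif_neg (by omega)]

lemma jordan_mul {n : ℕ} (c : ℂ) (M : Matrix (Fin n) (Fin n) ℂ) (p q : Fin n) :
    (jordanC c n * M) p q = c * M p q + if h : (p : ℕ) + 1 < n then M ⟨p + 1, h⟩ q else 0 := by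
  rw [Matrix.mul_apply]
  have : ∀ j : Fin n, jordanC c n p j * M j q =
      (if j = p then c * M j q else 0) + (if (j : ℕ) = p + 1 then M j q else 0) := by
    intro j
    simp only [jordanC, Matrix.of_apply, Fin.ext_iff]
    split_ifs <;> first | omega | simp
  simp only [this, Finset.sum_add_distrib]
  congr 1
  · simp
  · split_ifs with h
    · rw [Finset.sum_eq_single ⟨p + 1, h⟩]
      · simp
      · intro b _ hb
        rw [if_neg]
        intro hh; exact hb (Fin.ext hh)
      · simp
    · apply Finset.sum_eq_zero
      intro j _
      rw [if_neg]
      omega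

lemma mul_jordan {n : ℕ} (c : ℂ) (M : Matrix (Fin n) (Fin n) ℂ) (p q : Fin n) :
    (M * jordanC c n) p q = M p q * c +
      if h : 0 < (q : ℕ) then M p ⟨q - 1, by omega⟩ else 0 := by
  rw [Matrix.mul_apply]
  have : ∀ j : Fin n, M p j * jordanC c n j q =
      (if j = q then M p j * c else 0) + (if (q : ℕ) = j + 1 then M p j else 0) := by
    intro j
    simp only [jordanC, Matrix.of_apply, Fin.ext_iff]
    split_ifs <;> first | omega | simp
  simp only [this, Finset.sum_add_distrib]
  congr 1
  · simp
  · split_ifs with h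
    · rw [Finset.sum_eq_single ⟨q - 1, by omega⟩]
      · rw [if_pos]
        simp; omega
      · intro b _ hb
        rw [if_neg]
        intro hh; apply hb; apply Fin.ext; simp; omega
      · simp
    · apply Finset.sum_eq_zero
      intro j _
      rw [if_neg]
      omega

lemma JgJ (n : ℕ) : jordanC Complex.I n * gIota n * jordanC Complex.I n = -gIota n := by
  have h1 : ∀ p q : Fin n, (jordanC Complex.I n * gIota n) p q =
      Complex.I * iotaAux n (p + 1) (q + 1) + iotaAux n (p + 1 + 1) (q + 1) := by
    intro p q
    rw [jordan_mul]
    simp only [gIota, Matrix.of_apply]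
    split_ifs with h
    · rfl
    · rw [iota_lt (p := p + 1 + 1) (Or.inl (by omega))]
  ext p q
  rw [mul_jordan, h1]
  have hI := Complex.I_mul_I
  have hg : (-gIota n) p q = -iotaAux n (p + 1) (q + 1) := rfl
  rw [hg]
  split_ifs with h
  · rw [h1]
    have e : (q : ℕ) - 1 + 1 = q := by omega
    simp only [e]
    rw [iota_rec (p := p + 1) (q := q) (by omega)]
    linear_combination (iotaAux n (p + 1) (q + 1) + iotaAux n (p + 1 + 1) q) * hI
  · rw [iota_lt (p := p + 1 + 1) (Or.inl (by omega))]
    linear_combination (iotaAux n (p + 1) (q + 1)) * hI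

lemma eq_one_of_comm {n : ℕ} (H : Matrix (Fin n) (Fin n) ℂ)
    (hc : jordanC Complex.I n * H = H * jordanC Complex.I n)
    (hl : ∀ p q : Fin n, (q : ℕ) + 1 = n → H p q = (1 : Matrix (Fin n) (Fin n) ℂ) p q) :
    H = 1 := by
  have key : ∀ k : ℕ, ∀ p q : Fin n, (q : ℕ) + 1 + k = n →
      H p q = (1 : Matrix (Fin n) (Fin n) ℂ) p q := by
    intro k
    induction k with
    | zero => intro p q h; exact hl p q h
    | succ k ih =>
      intro p q h
      have hq : (q : ℕ) + 1 < n := by omega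
      have e := congrFun (congrFun hc p) ⟨q + 1, hq⟩
      rw [jordan_mul, mul_jordan, dif_pos (show 0 < (q : ℕ) + 1 by omega)] at e
      have e2 : H p q = if h : (p : ℕ) + 1 < n then H ⟨p + 1, h⟩ ⟨q + 1, hq⟩ else 0 := by
        simp only [Nat.add_sub_cancel] at e
        linear_combination -e
      rw [e2]
      split_ifs with hp
      · rw [ih _ _ (by simp; omega)]
        simp [Matrix.one_apply, Fin.ext_iff]
      · rw [Matrix.one_apply_ne]
        intro hpq
        rw [hpq] at hp
        omega
  ext p q
  exact key (n - (q + 1)) p q (by omega)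

lemma gg_last {n : ℕ} (p q : Fin n) (hq : (q : ℕ) + 1 = n) :
    (gIota n * gIota n) p q = (1 : Matrix (Fin n) (Fin n) ℂ) p q := by
  have h : ∀ j, gIota n j q = if j = q then 1 else 0 := by
    intro j
    simp only [gIota, Matrix.of_apply, hq, iota_last, Fin.ext_iff]
    congr 1
    apply propext; omega
  rw [Matrix.mul_apply]
  simp only [h]
  simp [h, Matrix.one_apply]

lemma map_inj {n : ℕ} : Function.Injective
    (fun M : Matrix (Fin n) (Fin n) ℂ => C2Hhom.mapMatrix M) := by
  intro M N h
  ext1 p q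
  have := congrFun (congrFun h p) q
  exact C2Hhom.injective this

lemma qdet_complex {n : ℕ} (M : Matrix (Fin n) (Fin n) ℂ) :
    qdet (M.map C2H) = M.det * (starRingEnd ℂ) M.det := by
  have : Phi (M.map C2H) = Matrix.fromBlocks M 0 0 (M.map (starRingEnd ℂ)) := by
    unfold Phi
    congr 1 <;> ext p q <;> simp [qc1, qc2, C2H, Complex.ext_iff]
  rw [qdet, this, Matrix.det_fromBlocks_zero₂₁]
  congr 1
  exact ((starRingEnd ℂ).map_det M).symm

/-- For `A = J(i, n) ∈ SL(n, ℍ)` there is an involution `g ∈ SL(n, ℍ)` with complex entries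
such that `g A g⁻¹ = -A⁻¹`; explicitly, the upper triangular matrix `gIota n` works. -/
theorem jordan_I_conj_to_neg_inv_by_involution (n : ℕ)
    (A : (Matrix (Fin n) (Fin n) (Quaternion ℝ))ˣ) (hA : A.val = jordanH Complex.I n) :
    ∃ g : (Matrix (Fin n) (Fin n) (Quaternion ℝ))ˣ,
      g.val = (gIota n).map C2H ∧ qdet g.val = 1 ∧ g * g = 1 ∧ g * A * g⁻¹ = -A⁻¹ := by
  set a := C2Hhom.mapMatrix (jordanC Complex.I n) with ha
  set G := C2Hhom.mapMatrix (gIota n) with hG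
  have hAa : A.val = a := hA
  have hJ : a * G * a = -G := by
    rw [ha, hG, ← map_mul, ← map_mul, JgJ, map_neg]
  have hL : a * G = -(G * A⁻¹.val) := by
    rw [← neg_mul, ← hJ, ← hAa, mul_assoc _ A.val, A.mul_inv, mul_one]
  have hR : G * a = -(A⁻¹.val * G) := by
    rw [← mul_neg, ← hJ, ← hAa, mul_assoc A.val, ← mul_assoc, A.inv_mul, one_mul]
  have hc : a * (G * G) = (G * G) * a := by
    rw [← mul_assoc, hL, mul_assoc G G, hR, neg_mul, mul_neg, mul_assoc]
  have hcC : jordanC Complex.I n * (gIota n * gIota n)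
      = (gIota n * gIota n) * jordanC Complex.I n := by
    apply map_inj
    simpa only [map_mul] using hc
  have hgg := eq_one_of_comm _ hcC gg_last
  have hGG : G * G = 1 := by rw [hG, ← map_mul, hgg, map_one]
  refine ⟨⟨G, G, hGG, hGG⟩, rfl, ?_, Units.ext hGG, ?_⟩
  · change qdet ((gIota n).map C2H) = 1
    rw [qdet_complex]
    have hd : (gIota n).det * (gIota n).det = 1 := by rw [← Matrix.det_mul, hgg, Matrix.det_one]
    rcases mul_self_eq_one_iff.mp hd with h | h <;> simp [h]
  · rw [mul_inv_eq_iff_eq_mul]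
    apply Units.ext
    change G * A.val = -(A⁻¹.val) * G
    rw [hAa, hR, neg_mul]
end
end

section
/- Let A ∈ SL(n,ℍ) be such that gAg⁻¹ = −A⁻¹ for some g ∈ SL(n,ℍ). Then A can be written as a product A = σ·τ where σ, τ ∈ SL(n,ℍ), σ² = −Iₙ (a skew-involution) and τ² = Iₙ (an involution). -/
set_option maxHeartbeats 1000000

noncomputable section

open Matrix

/-- In a field algebraic over `ℝ`, every square is a fourth power. -/
lemma aux_fourth_field (F : Type*) [Field F] [Algebra ℝ F] [Algebra.IsAlgebraic ℝ F] (u : F) :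
    ∃ c : F, c ^ 4 = u ^ 2 := by
  rcases Real.nonempty_algEquiv_or F with ⟨⟨e⟩⟩ | ⟨⟨e⟩⟩
  · refine ⟨e.symm (Real.sqrt |e u|), e.injective ?_⟩
    rw [map_pow, map_pow, e.apply_symm_apply]
    rw [show (4 : ℕ) = 2 * 2 from rfl, pow_mul, Real.sq_sqrt (abs_nonneg _), sq_abs]
  · obtain ⟨w, hw⟩ := IsAlgClosed.exists_pow_nat_eq (e u) (n := 2) (by norm_num)
    refine ⟨e.symm w, e.injective ?_⟩
    rw [map_pow, map_pow, e.apply_symm_apply]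
    rw [show (4 : ℕ) = 2 * 2 from rfl, pow_mul, hw]

/-- In a finite-dimensional commutative real algebra, the square of a unit is a fourth power. -/
lemma aux_fourth (S : Type*) [CommRing S] [Algebra ℝ S] [FiniteDimensional ℝ S]
    (u : S) (hu : IsUnit u) : ∃ c : S, c ^ 4 = u ^ 2 := by
  have hart : IsArtinianRing S := IsArtinianRing.of_finite ℝ S
  have key : ∀ m : MaximalSpectrum S, ∃ c : S ⧸ m.asIdeal,
      c ^ 4 = (Ideal.Quotient.mk m.asIdeal u) ^ 2 := by
    intro m
    have := m.isMaximal
    letI : Field (S ⧸ m.asIdeal) := Ideal.Quotient.field _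
    haveI : Algebra.IsAlgebraic ℝ (S ⧸ m.asIdeal) := Algebra.IsAlgebraic.of_finite _ _
    exact aux_fourth_field (S ⧸ m.asIdeal) _
  choose c hc using key
  have hcop : Pairwise (Function.onFun IsCoprime
      (MaximalSpectrum.asIdeal : MaximalSpectrum S → Ideal S)) := by
    intro m m' hmm
    have h1 := m.isMaximal
    have h2 := m'.isMaximal
    refine Ideal.isCoprime_of_isMaximal ?_
    intro h
    exact hmm (MaximalSpectrum.ext h)
  obtain ⟨x, hx⟩ := Ideal.pi_quotient_surjective hcop c
  have hnil : IsNilpotent (x ^ 4 - u ^ 2) := by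
    rw [← mem_nilradical, IsArtinianRing.nilradical_eq_iInf, Ideal.mem_iInf]
    intro m
    rw [← Ideal.Quotient.eq_zero_iff_mem, map_sub, map_pow, map_pow, ← hc m, ← hx m]
    exact sub_self _
  have hx4 : IsUnit (x ^ 4) := by
    have := hnil.isUnit_add_right_of_commute (hu.pow 2) (Commute.all _ _)
    simpa using this
  have hxu : IsUnit x := (isUnit_pow_iff (by norm_num)).1 hx4
  let P : Polynomial S := Polynomial.X ^ 4 - Polynomial.C (u ^ 2)
  have h4 : IsUnit (4 : S) := by
    have : IsUnit (algebraMap ℝ S 4) := (IsUnit.mk0 (4 : ℝ) (by norm_num)).map _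
    rwa [map_ofNat] at this
  obtain ⟨r, ⟨-, hr⟩, -⟩ := Polynomial.existsUnique_nilpotent_sub_and_aeval_eq_zero
    (P := P) (x := x) (by simpa [P] using hnil) (by
      have e : Polynomial.aeval x (Polynomial.derivative P) = 4 * x ^ 3 := by
        simp only [P, Polynomial.derivative_sub, Polynomial.derivative_C,
          Polynomial.derivative_X_pow, sub_zero]
        simp
      rw [e]
      exact h4.mul (hxu.pow 3))
  refine ⟨r, ?_⟩
  simpa [P, sub_eq_zero] using hr

lemma aux_split (S : Type*) [CommRing S] [Algebra ℝ S] [FiniteDimensional ℝ S]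
    (u : S) (hu : IsUnit u) : ∃ a b : S, a * b = 0 ∧ b * b - a * a = u := by
  obtain ⟨c, hc⟩ := aux_fourth S u hu
  obtain ⟨v, hv⟩ := hu.exists_right_inv
  have h2 : ∃ d : S, 2 * d = 1 := ⟨algebraMap ℝ S (1 / 2), by
    rw [show (2 : S) = algebraMap ℝ S 2 from (map_ofNat _ 2).symm, ← map_mul]; norm_num⟩
  obtain ⟨d, hd⟩ := h2
  -- `t = c² / u` satisfies `t² = 1`
  have ht : (c ^ 2 * v) * (c ^ 2 * v) = 1 := by
    linear_combination v ^ 2 * hc + (u * v + 1) * hv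
  have hcu : c ^ 2 * (c ^ 2 * v) = u := by
    linear_combination v * hc + u * hv
  generalize c ^ 2 * v = t at ht hcu
  refine ⟨c * (d * (1 - t)), c * (d * (1 + t)), ?_, ?_⟩
  · linear_combination (-c ^ 2 * d ^ 2) * ht
  · linear_combination (4 * d ^ 2) * hcu + u * (2 * d + 1) * hd

open scoped IsMulCommutative in
/-- The main algebraic lemma, in any finite-dimensional real algebra. -/
lemma aux_main (M : Type*) [Ring M] [Algebra ℝ M] [FiniteDimensional ℝ M]
    (A g : Mˣ) (h : g * A * g⁻¹ = -A⁻¹) :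
    ∃ s : M, s * s = -1 ∧ s * A.val = -(A⁻¹.val * s) := by
  have hgA : g.val * A.val = -(A⁻¹.val * g.val) := by
    have := congrArg Units.val (congrArg (· * g) h)
    simpa using this
  have hAg : A.val * g.val = -(g.val * A⁻¹.val) := by
    have h1 : A.val * (g.val * A.val) * A⁻¹.val = A.val * -(A⁻¹.val * g.val) * A⁻¹.val := by
      rw [hgA]
    simpa [mul_assoc] using h1
  -- `k = g⁻¹`
  have hkA : g⁻¹.val * A.val = -(A⁻¹.val * g⁻¹.val) := by
    have h1 : g⁻¹.val * (A.val * g.val) * g⁻¹.val = g⁻¹.val * -(g.val * A⁻¹.val) * g⁻¹.val := by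
      rw [hAg]
    simpa [mul_assoc] using h1
  let z : M := g.val * g.val
  have hzA : Commute A.val z := by
    show A.val * (g.val * g.val) = g.val * g.val * A.val
    rw [← mul_assoc, hAg, mul_assoc, hgA]
    simp only [neg_mul, mul_neg, mul_assoc, neg_inj, neg_neg]
  have hzg : Commute g.val z := by
    show g.val * (g.val * g.val) = g.val * g.val * g.val
    rw [mul_assoc]
  let S := Algebra.adjoin ℝ ({z} : Set M)
  haveI : IsMulCommutative S := Algebra.isMulCommutative_adjoin ℝ (by
    intro a ha b hb
    rw [Set.mem_singleton_iff] at ha hb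
    rw [ha, hb])
  let zS : S := ⟨z, Algebra.subset_adjoin rfl⟩
  haveI : FiniteDimensional ℝ S := inferInstance
  have hart : IsArtinianRing S := IsArtinianRing.of_finite ℝ S
  have hzu : IsUnit zS := by
    apply IsArtinianRing.isUnit_of_mem_nonZeroDivisors
    rw [mem_nonZeroDivisors_iff_right]
    intro x hx
    apply Subtype.ext
    have h1 : x.val * (g.val * g.val) = 0 := congrArg Subtype.val hx
    have h2 : x.val * (g.val * g.val) * g⁻¹.val * g⁻¹.val = 0 := by rw [h1]; simp
    simpa [mul_assoc] using h2
  obtain ⟨a, b, hab, hba⟩ := aux_split S zS hzu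
  have hab' : a.val * b.val = 0 := congrArg Subtype.val hab
  have hba1 : b.val * a.val = 0 := by
    have := congrArg Subtype.val ((mul_comm b a).trans hab)
    exact this
  have hba' : b.val * b.val - a.val * a.val = z := congrArg Subtype.val hba
  have comA : ∀ x : S, Commute A.val x.val := fun x =>
    Algebra.commute_of_mem_adjoin_singleton_of_commute x.2 hzA
  have comg : ∀ x : S, Commute g.val x.val := fun x =>
    Algebra.commute_of_mem_adjoin_singleton_of_commute x.2 hzg
  have comA' : ∀ x : S, Commute A⁻¹.val x.val := fun x => (comA x).units_inv_left
  have comk : ∀ x : S, Commute g⁻¹.val x.val := fun x => (comg x).units_inv_left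
  have step : g⁻¹.val * (a.val + b.val * A.val) = (a.val - b.val * A⁻¹.val) * g⁻¹.val := by
    rw [mul_add, (comk a).eq, ← mul_assoc, (comk b).eq, mul_assoc, hkA, sub_mul, mul_neg,
      ← sub_eq_add_neg, mul_assoc]
  have step2 : (a.val + b.val * A.val) * (a.val - b.val * A⁻¹.val) = -z := by
    have e1 : a.val * (b.val * A⁻¹.val) = 0 := by rw [← mul_assoc, hab', zero_mul]
    have e2 : b.val * A.val * a.val = 0 := by
      rw [mul_assoc, (comA a).eq, ← mul_assoc, hba1, zero_mul]
    have e3 : b.val * A.val * (b.val * A⁻¹.val) = b.val * b.val := by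
      rw [← mul_assoc, mul_assoc b.val, (comA b).eq]
      simp [mul_assoc]
    rw [add_mul, mul_sub, mul_sub, e1, e2, e3, ← hba']
    abel
  refine ⟨(a.val + b.val * A.val) * g⁻¹.val, ?_, ?_⟩
  · calc (a.val + b.val * A.val) * g⁻¹.val * ((a.val + b.val * A.val) * g⁻¹.val)
        = (a.val + b.val * A.val) * (g⁻¹.val * (a.val + b.val * A.val)) * g⁻¹.val := by
          simp only [mul_assoc]
      _ = ((a.val + b.val * A.val) * (a.val - b.val * A⁻¹.val)) * g⁻¹.val * g⁻¹.val := by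
          rw [step]; simp only [mul_assoc]
      _ = -1 := by rw [step2]; simp [z, mul_assoc]
  · have c1 : A⁻¹.val * (a.val + b.val * A.val) = (a.val + b.val * A.val) * A⁻¹.val := by
      rw [mul_add, add_mul, (comA' a).eq, ← mul_assoc, (comA' b).eq]
      simp [mul_assoc]
    rw [mul_assoc, hkA, ← mul_assoc, c1, mul_neg, mul_assoc]

lemma qc1_mul (p q : Quaternion ℝ) :
    qc1 (p * q) = qc1 p * qc1 q - qc2 p * (starRingEnd ℂ) (qc2 q) := by
  apply Complex.ext <;> simp [qc1, qc2] <;> ring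

lemma qc2_mul (p q : Quaternion ℝ) :
    qc2 (p * q) = qc1 p * qc2 q + qc2 p * (starRingEnd ℂ) (qc1 q) := by
  apply Complex.ext <;> simp [qc1, qc2] <;> ring

def qc1Hom : Quaternion ℝ →+ ℂ where
  toFun := qc1
  map_zero' := rfl
  map_add' p q := by apply Complex.ext <;> simp [qc1]

def qc2Hom : Quaternion ℝ →+ ℂ where
  toFun := qc2
  map_zero' := rfl
  map_add' p q := by apply Complex.ext <;> simp [qc2]

lemma qc1_sum {ι : Type*} (s : Finset ι) (f : ι → Quaternion ℝ) :
    qc1 (∑ i ∈ s, f i) = ∑ i ∈ s, qc1 (f i) := map_sum qc1Hom f s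

lemma qc2_sum {ι : Type*} (s : Finset ι) (f : ι → Quaternion ℝ) :
    qc2 (∑ i ∈ s, f i) = ∑ i ∈ s, qc2 (f i) := map_sum qc2Hom f s

lemma Phi_mul {m : Type*} [Fintype m] (A B : Matrix m m (Quaternion ℝ)) :
    Phi (A * B) = Phi A * Phi B := by
  rw [Phi, Phi, Phi, Matrix.fromBlocks_multiply]
  congr 1 <;> ext1 i j <;>
    simp [Matrix.mul_apply, qc1_sum, qc2_sum, qc1_mul, qc2_mul, Finset.sum_add_distrib,
      Finset.sum_sub_distrib, sub_eq_add_neg, add_comm]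

lemma qdet_mul {m : Type*} [Fintype m] [DecidableEq m] (A B : Matrix m m (Quaternion ℝ)) :
    qdet (A * B) = qdet A * qdet B := by
  rw [qdet, Phi_mul, Matrix.det_mul]; rfl

lemma Phi_neg_one {m : Type*} [DecidableEq m] :
    Phi (-1 : Matrix m m (Quaternion ℝ)) = -1 := by
  rw [Phi, ← Matrix.fromBlocks_one, Matrix.fromBlocks_neg]
  congr 1 <;> ext1 i j <;> by_cases hij : i = j <;>
    simp [hij, Matrix.one_apply, qc1, qc2, Complex.ext_iff] <;> exact ⟨rfl, rfl⟩

lemma qdet_neg_one {m : Type*} [Fintype m] [DecidableEq m] :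
    qdet (-1 : Matrix m m (Quaternion ℝ)) = 1 := by
  rw [qdet, Phi_neg_one, Matrix.det_neg, Matrix.det_one, Fintype.card_sum, ← two_mul, pow_mul]
  simp

lemma qdet_conj {m : Type*} [Fintype m] [DecidableEq m] (A : Matrix m m (Quaternion ℝ)) :
    (starRingEnd ℂ) (qdet A) = qdet A := by
  let J : Matrix (m ⊕ m) (m ⊕ m) ℂ := Matrix.fromBlocks 0 1 (-1) 0
  have hJ : J * J = -1 := by
    simp only [J, Matrix.fromBlocks_multiply, ← Matrix.fromBlocks_one, Matrix.fromBlocks_neg]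
    simp
  have hdJ : J.det ≠ 0 := by
    intro h0
    have := congrArg Matrix.det hJ
    rw [Matrix.det_mul, h0, Matrix.det_neg, Matrix.det_one, Fintype.card_sum, ← two_mul,
      pow_mul] at this
    simp at this
  have hc : J * Phi A = (starRingEnd ℂ).mapMatrix (Phi A) * J := by
    have : (starRingEnd ℂ).mapMatrix (Phi A) = Matrix.fromBlocks
      (A.map fun q => (starRingEnd ℂ) (qc1 q)) (A.map fun q => (starRingEnd ℂ) (qc2 q))
      (-(A.map qc2)) (A.map qc1) := by
      ext i j
      rcases i with i | i <;> rcases j with j | j <;> simp [Phi]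
    rw [this]
    simp only [J, Phi, Matrix.fromBlocks_multiply]
    simp
  have hd := congrArg Matrix.det hc
  rw [Matrix.det_mul, Matrix.det_mul, ← RingHom.map_det, mul_comm] at hd
  exact (mul_right_cancel₀ hdJ hd).symm

lemma qdet_skew {m : Type*} [Fintype m] [DecidableEq m] (s : Matrix m m (Quaternion ℝ))
    (hs : s * s = -1) : qdet s = 1 := by
  let r : ℝ := (Real.sqrt 2)⁻¹
  have hr : r * r * 2 = 1 := by
    have : Real.sqrt 2 * Real.sqrt 2 = 2 := Real.mul_self_sqrt (by norm_num)
    have h0 : Real.sqrt 2 ≠ 0 := by positivity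
    simp only [r]
    field_simp
    nlinarith
  let t : Matrix m m (Quaternion ℝ) := r • (1 + s)
  have ht : t * t = s := by
    have e : (1 + s) * (1 + s) = (2 : ℝ) • s := by
      rw [add_mul, mul_add, mul_add, hs, two_smul, one_mul, one_mul, mul_one]; abel
    simp only [t]
    rw [smul_mul_assoc, mul_smul_comm, e, smul_smul, smul_smul, hr, one_smul]
  obtain ⟨x, hx⟩ := Complex.conj_eq_iff_real.1 (qdet_conj t)
  have h1 : qdet s = ((x * x : ℝ) : ℂ) := by
    rw [← ht, qdet_mul, hx]; push_cast; rfl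
  have h2 : qdet s * qdet s = 1 := by rw [← qdet_mul, hs, qdet_neg_one]
  rw [h1] at h2
  have h3 : (x * x) * (x * x) = 1 := by exact_mod_cast h2
  have h4 : x * x = 1 := by nlinarith [mul_self_nonneg x]
  rw [h1, h4]; simp

/-- If `A ∈ SL(n, ℍ)` satisfies `g A g⁻¹ = -A⁻¹` for some `g ∈ SL(n, ℍ)`, then `A` is a
product of a skew-involution and an involution in `SL(n, ℍ)`. -/
theorem product_skewInvolution_involution (n : ℕ)
    (A : (Matrix (Fin n) (Fin n) (Quaternion ℝ))ˣ) (hA : qdet A.val = 1)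
    (h : ∃ g : (Matrix (Fin n) (Fin n) (Quaternion ℝ))ˣ,
      qdet g.val = 1 ∧ g * A * g⁻¹ = -A⁻¹) :
    ∃ σ τ : (Matrix (Fin n) (Fin n) (Quaternion ℝ))ˣ,
      qdet σ.val = 1 ∧ qdet τ.val = 1 ∧
      σ.val * σ.val = -1 ∧ τ.val * τ.val = 1 ∧ A = σ * τ := by
  obtain ⟨g, -, hg⟩ := h
  obtain ⟨s, hs, hsA⟩ := aux_main _ A g hg
  let σ : (Matrix (Fin n) (Fin n) (Quaternion ℝ))ˣ :=
    ⟨s, -s, by rw [mul_neg, hs, neg_neg], by rw [neg_mul, hs, neg_neg]⟩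
  have hσ : qdet σ.val = 1 := qdet_skew s hs
  have hprod : A = σ * (σ⁻¹ * A) := by simp
  refine ⟨σ, σ⁻¹ * A, hσ, ?_, hs, ?_, hprod⟩
  · have := congrArg (fun u => qdet (Units.val u)) hprod
    simp only [Units.val_mul, qdet_mul] at this
    rw [Units.val_mul, qdet_mul]
    rw [hσ, one_mul] at this
    exact this.symm.trans hA
  · show (-s * A.val) * (-s * A.val) = 1
    rw [neg_mul, neg_mul_neg, hsA, neg_mul]
    calc -(A⁻¹.val * s * -(A⁻¹.val * s)) = A⁻¹.val * s * (A⁻¹.val * s) := by simp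
      _ = -(A⁻¹.val * s * (s * A.val)) := by rw [hsA]; simp
      _ = -(A⁻¹.val * (s * s) * A.val) := by simp only [mul_assoc]
      _ = 1 := by rw [hs]; simp
end
end
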